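/- For n ≥ 2 and 1 ≤ k ≤ n-1, the sum over all hypertrees T with k hyperedges on n labelled vertices of the product Π_{e hyperedge of T} (|e|-2)! equals n^{k-1} |S_1(n-1,k)|, where S_1(n-1,k) is the Stirling number of the first kind; i.e. Σ_{T ∈ HT_k(n)} Π_{e∈E(T)} (|e|-2)! = (-1)^{n+k+1} n^{k-1} S_1(n-1,k). -/

import Mathlib

/-- A hyperforest on the vertex set `V`: a hypergraph whose hyperedges (of size at
least `2`) pairwise intersect in at most one vertex, and in which every cycle
(a cyclic sequence of at least three distinct consecutively adjacent vertices)
is contained in a single hyperedge. -/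
structure Hyperforest (V : Type*) [DecidableEq V] where
  edges : Finset (Finset V)
  two_le : ∀ e ∈ edges, 2 ≤ e.card
  inter : ∀ e ∈ edges, ∀ f ∈ edges, e ≠ f → (e ∩ f).card ≤ 1
  cycles : ∀ (k : ℕ) (v : Fin (k + 3) → V), Function.Injective v →
    (∀ j : Fin (k + 3), ∃ e ∈ edges, v j ∈ e ∧ v (j + 1) ∈ e) →
    ∃ e ∈ edges, ∀ j, v j ∈ e

/-- The order on hyperforests: `F' ≤ F` iff every hyperedge of `F'` is contained
in some hyperedge of `F`. -/
def HFle {V : Type*} [DecidableEq V] (F' F : Hyperforest V) : Prop :=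
  ∀ e' ∈ F'.edges, ∃ e ∈ F.edges, e' ⊆ e

/-- A hyperforest is connected (i.e. is a hypertree) if any two vertices are
joined by a path of consecutively adjacent vertices. -/
def HFConnected {V : Type*} [DecidableEq V] (F : Hyperforest V) : Prop :=
  ∀ u v : V, Relation.ReflTransGen (fun a b => a ≠ b ∧ ∃ e ∈ F.edges, a ∈ e ∧ b ∈ e) u v

/-- The signed Stirling numbers of the first kind, defined by
`∑_k S1 n k • x^k = x (x-1) ⋯ (x-n+1)`. -/
noncomputable def S1 (n k : ℕ) : ℤ :=
  (∏ j ∈ Finset.range n, (Polynomial.X - Polynomial.C (j : ℤ))).coeff k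

/-!
Root a hypertree at a vertex `r`. Every hyperedge contains exactly one vertex that can be reached
from `r` without passing through the hyperedge, its gate; removing the gates from the hyperedges
leaves blocks that partition the vertices other than `r`. Conversely, a partition of these vertices
with a parent vertex chosen for every block gives a hypertree exactly when climbing from blocks to
parents never runs in a cycle. Among `n` vertices, a partition into `k` blocks has `n ^ (k - 1)`
such choices of parents, whatever the sizes of the blocks. A hyperedge of size `m` comes from a
block of size `m - 1`, so its weight `(m - 2)!` is the number of cyclic orders of that block: summed
over the partitions, the weights count the permutations of `n - 1` letters by cycles.
-/

section TwoSection

variable {V : Type*}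

/-- The 2-section of a family of hyperedges: the graph joining two distinct vertices when they lie
in a common hyperedge. It carries the notion of connectedness of hypergraphs. -/
def twoSection (E : Finset (Finset V)) : SimpleGraph V where
  Adj a b := a ≠ b ∧ ∃ e ∈ E, a ∈ e ∧ b ∈ e
  symm := ⟨fun _ _ ⟨hne, e, he, ha, hb⟩ => ⟨hne.symm, e, he, hb, ha⟩⟩
  loopless := ⟨fun _ h => h.1 rfl⟩

lemma twoSection_mono {E E' : Finset (Finset V)} (h : E ⊆ E') : twoSection E ≤ twoSection E' :=
  fun _ _ ⟨hne, e, he, hab⟩ => ⟨hne, e, h he, hab⟩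

lemma reachable_twoSection {E : Finset (Finset V)} {e : Finset V} {a b : V} (he : e ∈ E)
    (ha : a ∈ e) (hb : b ∈ e) : (twoSection E).Reachable a b := by
  obtain rfl | hne := eq_or_ne a b
  · exact .rfl
  · exact SimpleGraph.Adj.reachable ⟨hne, e, he, ha, hb⟩

@[elab_as_elim]
lemma reachable_twoSection_induction {E : Finset (Finset V)} {r v : V} {motive : V → Prop}
    (h : (twoSection E).Reachable r v) (base : motive r)
    (step : ∀ e ∈ E, ∀ x ∈ e, ∀ y ∈ e, motive x → motive y) : motive v := by
  rw [SimpleGraph.reachable_iff_reflTransGen] at h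
  induction h with
  | refl => exact base
  | tail _ hxy ih =>
    obtain ⟨-, e, he, hx, hy⟩ := hxy
    exact step e he _ hx _ hy ih

lemma reachable_twoSection_subset_or_exists [DecidableEq V] {E : Finset (Finset V)}
    (E' : Finset (Finset V)) {r v : V} (h : (twoSection E).Reachable r v) :
    (twoSection E').Reachable r v ∨ ∃ e ∈ E \ E', ∃ w ∈ e, (twoSection E').Reachable r w := by
  refine reachable_twoSection_induction h (.inl .rfl) ?_
  rintro e he x hx y hy (hrx | hhit)
  · by_cases heE' : e ∈ E'
    · exact .inl (hrx.trans (reachable_twoSection heE' hx hy))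
    · exact .inr ⟨e, Finset.mem_sdiff.mpr ⟨he, heE'⟩, x, hx, hrx⟩
  · exact .inr hhit

lemma reachable_twoSection_erase_or_exists [DecidableEq V] {E : Finset (Finset V)}
    (e : Finset V) {r v : V} (h : (twoSection E).Reachable r v) :
    (twoSection (E.erase e)).Reachable r v ∨
      ∃ w ∈ e, (twoSection (E.erase e)).Reachable r w := by
  refine (reachable_twoSection_subset_or_exists (E.erase e) h).imp_right ?_
  rintro ⟨f, hf, w, hw, hrw⟩
  obtain rfl : f = e := by grind
  exact ⟨w, hw, hrw⟩

end TwoSection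

section Hypertree

variable {V : Type*} [DecidableEq V]

/-- Berge acyclicity: deleting a hyperedge leaves its vertices in pairwise distinct components.
This local reformulation of the cycle condition defining hyperforests is the one that interacts
well with rooting a hypertree. -/
def BergeAcyclic (E : Finset (Finset V)) : Prop :=
  ∀ e ∈ E, ∀ a ∈ e, ∀ b ∈ e, (twoSection (E.erase e)).Reachable a b → a = b

/-- The hyperedge families of hypertrees, i.e. of connected hyperforests. -/
structure IsHypertree (E : Finset (Finset V)) : Prop where
  two_le_card : ∀ e ∈ E, 2 ≤ e.card
  bergeAcyclic : BergeAcyclic E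
  preconnected : (twoSection E).Preconnected

lemma BergeAcyclic.card_inter_le_one {E : Finset (Finset V)} (hE : BergeAcyclic E) :
    ∀ e ∈ E, ∀ f ∈ E, e ≠ f → (e ∩ f).card ≤ 1 := by
  intro e he f hf hne
  refine Finset.card_le_one.mpr fun a ha b hb => ?_
  rw [Finset.mem_inter] at ha hb
  exact hE e he a ha.1 b hb.1
    (reachable_twoSection (Finset.mem_erase.mpr ⟨hne.symm, hf⟩) ha.2 hb.2)

-- The vertex reached last in `e 0` before the cycle closes up at `v 0` would be joined to `v 0`
-- outside `e 0` if the closing hyperedge were not `e 0` itself.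
lemma BergeAcyclic.last_eq_zero {E : Finset (Finset V)} (hE : BergeAcyclic E) {k : ℕ}
    {v : Fin (k + 3) → V} (hv : Function.Injective v) {e : Fin (k + 3) → Finset V}
    (he : ∀ j, e j ∈ E) (hmem : ∀ j, v j ∈ e j) (hmem' : ∀ j, v (j + 1) ∈ e j) :
    e (Fin.last _) = e 0 := by
  have reach_of_hit : ∀ i : Fin (k + 2), ∃ j : Fin (k + 2), v j.succ ∈ e 0 ∧
      (twoSection (E.erase (e 0))).Reachable (v j.succ) (v i.succ) := by
    intro i
    induction i using Fin.induction with
    | zero => exact ⟨0, by simpa using hmem' 0, .rfl⟩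
    | succ i ih =>
      obtain ⟨j, hj, hreach⟩ := ih
      have hsucc : i.castSucc.succ + 1 = i.succ.succ := by
        rw [Fin.succ_castSucc, Fin.coeSucc_eq_succ]
      have hnext : v i.succ.succ ∈ e i.castSucc.succ := hsucc ▸ hmem' i.castSucc.succ
      by_cases heq : e i.castSucc.succ = e 0
      · exact ⟨i.succ, heq ▸ hnext, .rfl⟩
      · exact ⟨j, hj, hreach.trans <| reachable_twoSection
          (Finset.mem_erase.mpr ⟨heq, he _⟩) (hmem _) hnext⟩
  obtain ⟨j, hj, hreach⟩ := reach_of_hit (Fin.last _)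
  by_contra hne
  have hclose : v 0 ∈ e (Fin.last _) := by simpa using hmem' (Fin.last _)
  have hreach0 := hreach.trans <| reachable_twoSection
    (Finset.mem_erase.mpr ⟨hne, he (Fin.last _)⟩) (hmem _) hclose
  exact Fin.succ_ne_zero j (hv (hE _ (he 0) _ hj _ (hmem 0) hreach0))

lemma BergeAcyclic.exists_edge_of_cycle {E : Finset (Finset V)} (hE : BergeAcyclic E) (k : ℕ)
    (v : Fin (k + 3) → V) (hv : Function.Injective v)
    (h : ∀ j : Fin (k + 3), ∃ e ∈ E, v j ∈ e ∧ v (j + 1) ∈ e) :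
    ∃ e ∈ E, ∀ j, v j ∈ e := by
  choose e he hmem hmem' using h
  have heq_pred : ∀ j, e (Fin.last _ + j) = e j := fun j => by
    simpa using hE.last_eq_zero (v := fun i => v (i + j)) (e := fun i => e (i + j))
      (hv.comp (add_left_injective j)) (fun _ => he _) (fun _ => hmem _)
      (fun i => by simpa only [add_right_comm] using hmem' (i + j))
  have heq_zero : ∀ j, e j = e 0 := by
    intro j
    induction j using Fin.induction with
    | zero => rfl
    | succ j ih =>
      rw [← ih, ← heq_pred j.succ]
      congr 1
      rw [← Fin.coeSucc_eq_succ, add_left_comm, Fin.last_add_one, add_zero]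
  exact ⟨e 0, he 0, fun j => heq_zero j ▸ hmem j⟩

namespace Hyperforest

lemma eq_of_mem_of_mem (F : Hyperforest V) {e f : Finset V} (he : e ∈ F.edges)
    (hf : f ∈ F.edges) {a b : V} (hab : a ≠ b) (hae : a ∈ e) (hbe : b ∈ e) (haf : a ∈ f)
    (hbf : b ∈ f) : e = f := by
  by_contra hne
  exact hab (Finset.card_le_one.mp (F.inter e he f hf hne) a (Finset.mem_inter.mpr ⟨hae, haf⟩)
    b (Finset.mem_inter.mpr ⟨hbe, hbf⟩))

lemma exists_edge_of_isPath (F : Hyperforest V) {a b : V} {p : (twoSection F.edges).Walk a b}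
    (hp : p.IsPath) (hlen : 2 ≤ p.length) {e : Finset V} (he : e ∈ F.edges) (ha : a ∈ e)
    (hb : b ∈ e) : ∃ g ∈ F.edges, ∀ i ≤ p.length, p.getVert i ∈ g := by
  obtain ⟨l, hl⟩ := Nat.exists_eq_add_of_le' hlen
  have hadj : ∀ j : Fin (l + 3), ∃ g ∈ F.edges, p.getVert j ∈ g ∧
      p.getVert (j + 1 : Fin (l + 3)) ∈ g := by
    intro j
    obtain ⟨j, rfl⟩ | rfl := j.eq_castSucc_or_eq_last
    · obtain ⟨-, g, hg, hj⟩ := p.adj_getVert_succ (i := j) (by omega)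
      exact ⟨g, hg, by simpa using hj⟩
    · exact ⟨e, he, by simpa [← hl] using hb, by simpa using ha⟩
  obtain ⟨g, hg, hmem⟩ := F.cycles l (fun j => p.getVert j)
    (fun i j hij => Fin.ext (hp.getVert_injOn (by grind) (by grind) hij)) hadj
  exact ⟨g, hg, fun i hi => hmem ⟨i, by omega⟩⟩

-- A path joining two vertices of `e` outside `e` closes up to a cycle through `e`, so that all its
-- vertices, in particular the first two, lie in `e`.
lemma bergeAcyclic_edges (F : Hyperforest V) : BergeAcyclic F.edges := by
  intro e he a ha b hb hreach
  by_contra hne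
  obtain ⟨q, hq⟩ := hreach.exists_isPath
  have not_both_mem : ∀ x y, (twoSection (F.edges.erase e)).Adj x y → x ∈ e → y ∉ e := by
    rintro x y ⟨hxy, g, hg, hxg, hyg⟩ hxe hye
    obtain ⟨hge, hg⟩ := Finset.mem_erase.mp hg
    exact hge (F.eq_of_mem_of_mem hg he hxy hxg hyg hxe hye)
  have hlen : 2 ≤ q.length := by
    by_contra! hlt
    obtain h0 | h1 : q.length = 0 ∨ q.length = 1 := by omega
    · exact hne (SimpleGraph.Walk.eq_of_length_eq_zero h0)
    · exact not_both_mem a b (SimpleGraph.Walk.adj_of_length_eq_one h1) ha hb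
  have hle := twoSection_mono (Finset.erase_subset e F.edges)
  obtain ⟨g, hg, hmem⟩ := F.exists_edge_of_isPath (p := q.mapLe hle)
    ((SimpleGraph.Walk.isPath_mapLe hle).mpr hq) (by simpa using hlen) he ha hb
  simp only [SimpleGraph.Walk.length_map, SimpleGraph.Walk.mapLe,
    SimpleGraph.Walk.getVert_map, SimpleGraph.Hom.coe_ofLE, id] at hmem
  obtain rfl : g = e := F.eq_of_mem_of_mem hg he hne (by simpa using hmem 0 (Nat.zero_le _))
    (by simpa using hmem _ le_rfl) ha hb
  exact not_both_mem _ _ (q.adj_getVert_succ (i := 0) (by omega)) (hmem 0 (by omega))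
    (hmem 1 (by omega))

lemma hfConnected_iff_preconnected (F : Hyperforest V) :
    HFConnected F ↔ (twoSection F.edges).Preconnected :=
  forall₂_congr fun u v =>
    (SimpleGraph.reachable_iff_reflTransGen (G := twoSection F.edges) u v).symm

lemma bijOn_edges_hypertree (V : Type*) [DecidableEq V] (k : ℕ) :
    Set.BijOn Hyperforest.edges {T : Hyperforest V | HFConnected T ∧ T.edges.card = k}
      {E | IsHypertree E ∧ E.card = k} := by
  refine ⟨?_, ?_, ?_⟩
  · rintro T ⟨hT, hcard⟩
    exact ⟨⟨T.two_le, T.bergeAcyclic_edges, T.hfConnected_iff_preconnected.mp hT⟩, hcard⟩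
  · rintro ⟨E, _, _, _⟩ _ ⟨E', _, _, _⟩ _ (rfl : E = E')
    rfl
  · rintro E ⟨hE, hcard⟩
    let T : Hyperforest V := ⟨E, hE.two_le_card, hE.bergeAcyclic.card_inter_le_one,
      hE.bergeAcyclic.exists_edge_of_cycle⟩
    exact ⟨T, ⟨T.hfConnected_iff_preconnected.mpr hE.preconnected, hcard⟩, rfl⟩

end Hyperforest

end Hypertree

section Parent

variable {V ι κ : Type*}

/-- For blocks `B i` of vertices hanging from parent vertices `p i`, the relation that `w` is the
parent of a block containing `v`. -/
def IsParent (B : ι → Finset V) (p : ι → V) (w v : V) : Prop := ∃ i, v ∈ B i ∧ p i = w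

/-- No vertex is its own proper ancestor: climbing from blocks to their parents always terminates.
On finitely many vertices, well-foundedness is the absence of cycles. -/
def AcyclicParents (B : ι → Finset V) (p : ι → V) : Prop := WellFounded (IsParent B p)

lemma isParent_comp_equiv (e : κ ≃ ι) (B : ι → Finset V) (p : ι → V) :
    IsParent (B ∘ e) (p ∘ e) = IsParent B p :=
  funext₂ fun _ _ => propext <|
    (e.surjective.exists (p := fun i => _ ∈ B i ∧ p i = _)).symm

lemma acyclicParents_comp_equiv (e : κ ≃ ι) {B : ι → Finset V} {p : ι → V} :
    AcyclicParents (B ∘ e) (p ∘ e) ↔ AcyclicParents B p := by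
  rw [AcyclicParents, isParent_comp_equiv, AcyclicParents]

lemma AcyclicParents.not_transGen {B : ι → Finset V} {p : ι → V} (hp : AcyclicParents B p)
    (v : V) : ¬ Relation.TransGen (IsParent B p) v v :=
  hp.transGen.irrefl.irrefl v

lemma AcyclicParents.not_reflTransGen_parent {B : ι → Finset V} {p : ι → V}
    (hp : AcyclicParents B p) {i : ι} {v : V} (hv : v ∈ B i) :
    ¬ Relation.ReflTransGen (IsParent B p) v (p i) := fun h =>
  hp.not_transGen v (Relation.TransGen.tail' h ⟨i, hv, rfl⟩)

lemma AcyclicParents.parent_notMem {B : ι → Finset V} {p : ι → V} (hp : AcyclicParents B p)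
    (i : ι) : p i ∉ B i := fun h => hp.not_reflTransGen_parent h .refl

section Merge

variable [DecidableEq V]

/-- The blocks obtained from `B` when the block `B none` is given the parent `v`: it is merged into
the block containing `v`, and dissolved if `v` lies in no block. -/
def mergeNone (B : Option κ → Finset V) (v : V) (j : κ) : Finset V :=
  if v ∈ B (some j) then B (some j) ∪ B none else B (some j)

lemma mem_mergeNone {B : Option κ → Finset V} {v w : V} {j : κ} :
    w ∈ mergeNone B v j ↔ w ∈ B (some j) ∨ w ∈ B none ∧ v ∈ B (some j) := by
  unfold mergeNone
  grind

lemma pairwise_disjoint_mergeNone {B : Option κ → Finset V}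
    (hB : Pairwise (Function.onFun Disjoint B)) (v : V) :
    Pairwise (Function.onFun Disjoint (mergeNone B v)) := by
  intro i j hij
  have hsome := Finset.disjoint_left.mp (hB ((Option.some_injective κ).ne hij))
  have hnone (j : κ) := Finset.disjoint_left.mp (hB (Option.some_ne_none j))
  refine Finset.disjoint_left.mpr fun w hi hj => ?_
  rw [mem_mergeNone] at hi hj
  rcases hi with hi | ⟨hw, hi⟩ <;> rcases hj with hj | ⟨hw', hj⟩
  · exact hsome hi hj
  · exact hnone i hi hw'
  · exact hnone j hj hw
  · exact hsome hi hj

-- Merging replaces parent by grandparent at the vertices of `B none` and changes nothing else.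
lemma acyclicParents_option_iff {B : Option κ → Finset V} {p : Option κ → V} :
    AcyclicParents B p ↔
      p none ∉ B none ∧ AcyclicParents (mergeNone B (p none)) (p ∘ some) := by
  constructor
  · refine fun hp => ⟨hp.parent_notMem none, Subrelation.wf ?_ hp.transGen⟩
    rintro w v ⟨j, hv, rfl⟩
    rcases mem_mergeNone.mp hv with hv | ⟨hv, hj⟩
    · exact .single ⟨some j, hv, rfl⟩
    · exact .tail (.single ⟨some j, hj, rfl⟩) ⟨none, hv, rfl⟩
  · rintro ⟨hnone, hp⟩
    refine ⟨fun v => ?_⟩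
    induction v using hp.induction with
    | _ v ih =>
    have acc_parent (j : κ) (hj : v ∈ mergeNone B (p none) j) : Acc (IsParent B p) (p (some j)) :=
      ih _ ⟨j, hj, rfl⟩
    refine ⟨_, ?_⟩
    rintro _ ⟨_ | j, hv, rfl⟩
    · refine ⟨_, ?_⟩
      rintro _ ⟨_ | j, hj, rfl⟩
      · exact absurd hj hnone
      · exact acc_parent j (mem_mergeNone.mpr (.inr ⟨hv, hj⟩))
    · exact acc_parent j (mem_mergeNone.mpr (.inl hv))

end Merge

section Count

lemma card_acyclicParents_comp_equiv (e : κ ≃ ι) (B : ι → Finset V) :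
    Nat.card {p : κ → V // AcyclicParents (B ∘ e) p} =
      Nat.card {p : ι → V // AcyclicParents B p} :=
  (Nat.card_congr <| (e.symm.arrowCongr (Equiv.refl V)).subtypeEquiv fun _ =>
    (acyclicParents_comp_equiv e).symm).symm

variable [Fintype V] [DecidableEq V]

lemma card_acyclicParents_option [Finite κ] (B : Option κ → Finset V) :
    Nat.card {p : Option κ → V // AcyclicParents B p} =
      ∑ v with v ∉ B none, Nat.card {q : κ → V // AcyclicParents (mergeNone B v) q} := by
  let e : {p : Option κ → V // AcyclicParents B p} ≃
      Σ v, {q : κ → V // v ∉ B none ∧ AcyclicParents (mergeNone B v) q} :=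
    (Equiv.piOptionEquivProd.subtypeEquiv fun _ => acyclicParents_option_iff).trans
      (Equiv.subtypeProdEquivSigmaSubtype _)
  rw [Nat.card_congr e, Nat.card_sigma, Finset.sum_filter]
  refine Finset.sum_congr rfl fun v _ => ?_
  split_ifs with hv <;> simp [hv]

lemma sum_card_roots_mergeNone [Fintype κ] {B : Option κ → Finset V}
    (hB : Pairwise (Function.onFun Disjoint B)) :
    ∑ v with v ∉ B none, Finset.card {w | ∀ j, w ∉ mergeNone B v j} =
      Fintype.card V * Finset.card {w | ∀ i, w ∉ B i} := by
  have hnone (j : κ) := Finset.disjoint_left.mp (hB (Option.some_ne_none j))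
  have card_roots : ∀ v ∈ ({v | v ∉ B none} : Finset V),
      Finset.card {w | ∀ j, w ∉ mergeNone B v j} =
        Finset.card {w | ∀ i, w ∉ B i} + if ∀ i, v ∉ B i then (B none).card else 0 := by
    intro v hv
    rw [Finset.mem_filter_univ] at hv
    split_ifs with hroot
    · have hdisj : Disjoint ({w | ∀ i, w ∉ B i} : Finset V) (B none) :=
        Finset.disjoint_left.mpr fun w hw => (Finset.mem_filter_univ w).mp hw none
      rw [← Finset.card_union_of_disjoint hdisj]
      congr 1
      ext w
      have := hnone (a := w)
      simp only [mem_mergeNone, Finset.mem_filter_univ, Finset.mem_union, Option.forall]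
      grind
    · have := hnone (a := v)
      congr 1
      ext w
      simp only [mem_mergeNone, Finset.mem_filter_univ, Option.forall] at hroot ⊢
      grind
  have filter_roots : ({v | v ∉ B none} : Finset V).filter (fun v => ∀ i, v ∉ B i) =
      ({v | ∀ i, v ∉ B i} : Finset V) := by
    ext v
    simpa using fun h => h none
  have card_compl : Finset.card {v | v ∉ B none} + (B none).card = Fintype.card V := by
    rw [Finset.filter_not, Finset.filter_mem_eq_inter, Finset.univ_inter,
      Finset.card_sdiff_add_card_eq_card (Finset.subset_univ _), Finset.card_univ]
  rw [Finset.sum_congr rfl card_roots, Finset.sum_add_distrib, Finset.sum_const,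
    ← Finset.sum_filter, filter_roots, Finset.sum_const, ← card_compl]
  simp only [smul_eq_mul]
  ring

-- Choosing the parent `v` of one block and merging that block into the block containing `v` reduces
-- the number of blocks; the number of roots of the merged family, summed over `v`, is
-- `Fintype.card V` times the original number of roots.
theorem card_acyclicParents_mul_card [Fintype ι] {B : ι → Finset V}
    (hB : Pairwise (Function.onFun Disjoint B)) :
    Nat.card {p : ι → V // AcyclicParents B p} * Fintype.card V =
      Finset.card {v | ∀ i, v ∉ B i} * Fintype.card V ^ Fintype.card ι := by
  revert B
  refine Fintype.induction_empty_option (P := fun ι _ => ∀ {B : ι → Finset V},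
    Pairwise (Function.onFun Disjoint B) →
      Nat.card {p : ι → V // AcyclicParents B p} * Fintype.card V =
        Finset.card {v | ∀ i, v ∉ B i} * Fintype.card V ^ Fintype.card ι) ?_ ?_ ?_ ι
  · intro α β _ e ih B hB
    let := Fintype.ofEquiv β e.symm
    have roots_comp : Finset.card {v | ∀ j, v ∉ (B ∘ e) j} = Finset.card {v | ∀ i, v ∉ B i} := by
      simp [e.surjective.forall]
    rw [← card_acyclicParents_comp_equiv e, ← Fintype.card_congr e,
      ih (B := B ∘ e) (hB.comp_of_injective e.injective), roots_comp]
  · intro B _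
    have (p : PEmpty → V) : AcyclicParents B p := ⟨fun v => ⟨v, fun _ ⟨i, _⟩ => i.elim⟩⟩
    simp [this, mul_comm]
  · intro κ _ ih B hB
    rw [card_acyclicParents_option, Finset.sum_mul,
      Finset.sum_congr rfl fun v _ => ih (pairwise_disjoint_mergeNone hB v), ← Finset.sum_mul,
      sum_card_roots_mergeNone hB, Fintype.card_option, pow_succ']
    ring

end Count

end Parent

section Gate

variable {V : Type*} [DecidableEq V] {E : Finset (Finset V)}

open scoped Classical in
/-- The gate of the hyperedge `e` as seen from the root `r`: the vertex of `e` joined to `r` without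
passing through `e`. It is unique in a hypertree; the value is `r` if there is no such vertex. -/
noncomputable def gate (E : Finset (Finset V)) (r : V) (e : Finset V) : V :=
  if h : ∃ c ∈ e, (twoSection (E.erase e)).Reachable r c then h.choose else r

/-- The block of vertices hanging from the gate of the hyperedge `e`. -/
noncomputable def hangingBlock (E : Finset (Finset V)) (r : V) (e : Finset V) : Finset V :=
  e.erase (gate E r e)

lemma eq_gate_or_mem_hangingBlock {r v : V} {e : Finset V} (hv : v ∈ e) :
    v = gate E r e ∨ v ∈ hangingBlock E r e :=
  or_iff_not_imp_left.mpr fun hne => Finset.mem_erase.mpr ⟨hne, hv⟩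

namespace IsHypertree

lemma gate_spec (hE : IsHypertree E) (r : V) {e : Finset V} (he : e ∈ E) :
    gate E r e ∈ e ∧ (twoSection (E.erase e)).Reachable r (gate E r e) := by
  have hex : ∃ c ∈ e, (twoSection (E.erase e)).Reachable r c := by
    obtain ⟨x, hx⟩ := Finset.card_pos.mp (zero_lt_two.trans_le (hE.two_le_card e he))
    exact (reachable_twoSection_erase_or_exists e (hE.preconnected r x)).elim
      (fun hrx => ⟨x, hx, hrx⟩) id
  rw [gate, dif_pos hex]
  exact hex.choose_spec

lemma eq_gate (hE : IsHypertree E) {r v : V} {e : Finset V} (he : e ∈ E) (hv : v ∈ e)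
    (hrv : (twoSection (E.erase e)).Reachable r v) : v = gate E r e :=
  have ⟨hmem, hreach⟩ := hE.gate_spec r he
  hE.bergeAcyclic e he v hv _ hmem (hrv.symm.trans hreach)

lemma nonempty_hangingBlock (hE : IsHypertree E) (r : V) {e : Finset V} (he : e ∈ E) :
    (hangingBlock E r e).Nonempty := by
  rw [hangingBlock, ← Finset.card_pos, Finset.card_erase_of_mem (hE.gate_spec r he).1]
  exact Nat.sub_pos_of_lt (hE.two_le_card e he)

lemma root_notMem_hangingBlock (hE : IsHypertree E) {r : V} {e : Finset V} (he : e ∈ E) :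
    r ∉ hangingBlock E r e := fun hr =>
  Finset.ne_of_mem_erase hr (hE.eq_gate he (Finset.mem_of_mem_erase hr) .rfl)

-- The component of `r` in the hypergraph of the hyperedges avoiding `v` does not contain `v`; the
-- hyperedge through which one leaves it has its gate in it.
lemma exists_mem_hangingBlock (hE : IsHypertree E) {r v : V} (hv : v ≠ r) :
    ∃ e ∈ E, v ∈ hangingBlock E r e := by
  have ne_of_reachable : ∀ x, (twoSection {e ∈ E | v ∉ e}).Reachable r x → x ≠ v := fun x hx =>
    reachable_twoSection_induction hx hv.symm fun e he _ _ y hy _ hyv =>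
      (Finset.mem_filter.mp he).2 (hyv ▸ hy)
  obtain hrv | ⟨e, he, w, hw, hrw⟩ :=
    reachable_twoSection_subset_or_exists {e ∈ E | v ∉ e} (hE.preconnected r v)
  · exact absurd rfl (ne_of_reachable v hrv)
  · obtain ⟨he, hve⟩ : e ∈ E ∧ v ∈ e := by simp_all
    have hle : twoSection {e ∈ E | v ∉ e} ≤ twoSection (E.erase e) :=
      twoSection_mono fun f hf => by grind
    have hgate : w = gate E r e := hE.eq_gate he hw (hrw.mono hle)
    exact ⟨e, he, Finset.mem_erase.mpr ⟨hgate ▸ (ne_of_reachable w hrw).symm, hve⟩⟩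

-- If `v` hung below two hyperedges, the way from `r` to the gate of one of them could be
-- continued to `v` without passing through the other.
lemma eq_of_mem_hangingBlock (hE : IsHypertree E) {r v : V} {e f : Finset V} (he : e ∈ E)
    (hf : f ∈ E) (hve : v ∈ hangingBlock E r e) (hvf : v ∈ hangingBlock E r f) : e = f := by
  rw [hangingBlock, Finset.mem_erase] at hve hvf
  by_contra hne
  obtain ⟨hge, hreach⟩ := hE.gate_spec r he
  obtain hrg | ⟨w, hw, hrw⟩ := reachable_twoSection_erase_or_exists f hreach
  · have hle : twoSection ((E.erase e).erase f) ≤ twoSection (E.erase f) :=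
      twoSection_mono (Finset.erase_subset_erase f (Finset.erase_subset e E))
    exact hvf.1 <| hE.eq_gate hf hvf.2 <| (hrg.mono hle).trans <|
      reachable_twoSection (Finset.mem_erase.mpr ⟨hne, he⟩) hge hve.2
  · have hle : twoSection ((E.erase e).erase f) ≤ twoSection (E.erase e) :=
      twoSection_mono (Finset.erase_subset f _)
    exact hve.1 <| hE.eq_gate he hve.2 <| (hrw.mono hle).trans <|
      reachable_twoSection (Finset.mem_erase.mpr ⟨Ne.symm hne, hf⟩) hw hvf.2

lemma acyclicParents_gate (hE : IsHypertree E) (r : V) :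
    AcyclicParents (fun e : E => hangingBlock E r e) (fun e : E => gate E r e) := by
  refine ⟨fun v => reachable_twoSection_induction (hE.preconnected r v) ⟨_, ?_⟩ ?_⟩
  · rintro _ ⟨e, hr, -⟩
    exact absurd hr (hE.root_notMem_hangingBlock e.2)
  · intro e he x hx y hy hacc
    have hgate : Acc (IsParent (fun e : E => hangingBlock E r e) fun e : E => gate E r e)
        (gate E r e) := by
      obtain rfl | hx := eq_gate_or_mem_hangingBlock (E := E) (r := r) hx
      · exact hacc
      · exact hacc.inv ⟨⟨e, he⟩, hx, rfl⟩
    obtain rfl | hy := eq_gate_or_mem_hangingBlock (E := E) (r := r) hy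
    · exact hgate
    · refine ⟨_, ?_⟩
      rintro _ ⟨⟨f, hf⟩, hyf, rfl⟩
      obtain rfl := hE.eq_of_mem_hangingBlock he hf hy hyf
      exact hgate

end IsHypertree

end Gate

section RootedHypertree

variable {V ι κ : Type*}

/-- A hypertree rooted at `r`, given by blocks `B i` partitioning the vertices other than `r` and
their parents `p i`. -/
structure IsRootedHypertree (r : V) (B : ι → Finset V) (p : ι → V) : Prop where
  disjoint : Pairwise (Function.onFun Disjoint B)
  nonempty : ∀ i, (B i).Nonempty
  exists_mem_iff : ∀ v, (∃ i, v ∈ B i) ↔ v ≠ r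
  acyclic : AcyclicParents B p

variable {r : V} {B : ι → Finset V} {p : ι → V}

namespace IsRootedHypertree

lemma index_eq_of_mem (h : IsRootedHypertree r B p) {i j : ι} {v : V} (hi : v ∈ B i)
    (hj : v ∈ B j) : i = j :=
  h.disjoint.eq (Finset.not_disjoint_iff.mpr ⟨v, hi, hj⟩)

lemma root_notMem (h : IsRootedHypertree r B p) (i : ι) : r ∉ B i := fun hi =>
  (h.exists_mem_iff r).mp ⟨i, hi⟩ rfl

lemma reflTransGen_iff_of_mem (h : IsRootedHypertree r B p) {i : ι} {x y : V} (hy : y ∈ B i) :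
    Relation.ReflTransGen (IsParent B p) x y ↔
      x = y ∨ Relation.ReflTransGen (IsParent B p) x (p i) := by
  refine ⟨fun hxy => ?_, ?_⟩
  · obtain rfl | ⟨_, hx, j, hj, rfl⟩ := hxy.cases_tail
    · exact .inl rfl
    · exact .inr (h.index_eq_of_mem hj hy ▸ hx)
  · rintro (rfl | hx)
    · exact .refl
    · exact hx.tail ⟨i, hy, rfl⟩

end IsRootedHypertree

variable [DecidableEq V]

/-- The hyperedge formed by the block `B i` and its parent `p i`. -/
def parentEdge (B : ι → Finset V) (p : ι → V) (i : ι) : Finset V := insert (p i) (B i)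

/-- The family of hyperedges obtained by attaching every block to its parent. -/
def parentEdges [Fintype ι] (B : ι → Finset V) (p : ι → V) : Finset (Finset V) :=
  Finset.univ.image (parentEdge B p)

lemma mem_parentEdge {i : ι} {v : V} : v ∈ parentEdge B p i ↔ v = p i ∨ v ∈ B i :=
  Finset.mem_insert

lemma parent_mem_parentEdge (i : ι) : p i ∈ parentEdge B p i := Finset.mem_insert_self _ _

lemma parentEdge_mem_parentEdges [Fintype ι] (i : ι) : parentEdge B p i ∈ parentEdges B p :=
  Finset.mem_image_of_mem _ (Finset.mem_univ i)

lemma mem_parentEdges [Fintype ι] {e : Finset V} :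
    e ∈ parentEdges B p ↔ ∃ i, parentEdge B p i = e := by
  simp [parentEdges]

lemma parentEdges_comp_equiv [Fintype ι] [Fintype κ] (e : κ ≃ ι) :
    parentEdges (B ∘ e) (p ∘ e) = parentEdges B p := by
  ext f
  simp only [mem_parentEdges]
  exact (e.surjective.exists (p := fun i => parentEdge B p i = f)).symm

namespace IsRootedHypertree

lemma card_parentEdge (h : IsRootedHypertree r B p) (i : ι) :
    (parentEdge B p i).card = (B i).card + 1 :=
  Finset.card_insert_of_notMem (h.acyclic.parent_notMem i)

lemma parentEdge_injective (h : IsRootedHypertree r B p) :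
    Function.Injective (parentEdge B p) := by
  have parent_mem {i j : ι} (hij : parentEdge B p i = parentEdge B p j) (hne : i ≠ j) :
      p j ∈ B i := by
    obtain ⟨v, hv⟩ := h.nonempty i
    obtain rfl | hv' := mem_parentEdge.mp (hij ▸ mem_parentEdge.mpr (.inr hv))
    · exact hv
    · exact absurd (h.index_eq_of_mem hv hv') hne
  intro i j hij
  by_contra hne
  exact h.acyclic.not_reflTransGen_parent (parent_mem hij hne)
    (.single ⟨j, parent_mem hij.symm (Ne.symm hne), rfl⟩)

lemma exists_equiv_parts [Finite ι] [Fintype V] (h : IsRootedHypertree r B p) :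
    ∃ (P : Finpartition (Finset.univ.erase r)) (σ : ι ≃ P.parts), ∀ i, (σ i).1 = B i := by
  cases nonempty_fintype ι
  have block_mem (i : ι) : B i ∈ Finset.univ.image B :=
    Finset.mem_image_of_mem B (Finset.mem_univ i)
  have block_injective : Function.Injective B := fun i j hij =>
    have ⟨_, hv⟩ := h.nonempty i
    h.index_eq_of_mem hv (hij ▸ hv)
  refine ⟨.ofExistsUnique (Finset.univ.image B) ?_ ?_ ?_,
    .ofBijective (fun i => ⟨B i, block_mem i⟩)
      ⟨fun i j hij => block_injective (Subtype.ext_iff.mp hij), ?_⟩, fun _ => rfl⟩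
  · refine Finset.forall_mem_image.mpr fun i _ v hv => ?_
    exact Finset.mem_erase.mpr ⟨(h.exists_mem_iff v).mp ⟨i, hv⟩, Finset.mem_univ v⟩
  · intro v hv
    obtain ⟨i, hi⟩ := (h.exists_mem_iff v).mpr (Finset.ne_of_mem_erase hv)
    refine ⟨B i, ⟨block_mem i, hi⟩, ?_⟩
    rintro _ ⟨hb, hv⟩
    obtain ⟨j, -, rfl⟩ := Finset.mem_image.mp hb
    rw [h.index_eq_of_mem hv hi]
  · simpa using fun i => (h.nonempty i).ne_empty
  · rintro ⟨b, hb⟩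
    obtain ⟨i, -, rfl⟩ := Finset.mem_image.mp hb
    exact ⟨i, rfl⟩

variable [Fintype ι]

-- To leave the descendants of `x`, one has to go through the hyperedge above `x`.
lemma reflTransGen_of_reachable (h : IsRootedHypertree r B p) {i : ι} {x y : V} (hx : x ∈ B i)
    (hxy : (twoSection ((parentEdges B p).erase (parentEdge B p i))).Reachable x y) :
    Relation.ReflTransGen (IsParent B p) x y := by
  refine reachable_twoSection_induction hxy .refl fun e he y hy z hz hxy => ?_
  obtain ⟨hne, he⟩ := Finset.mem_erase.mp he
  obtain ⟨j, rfl⟩ := mem_parentEdges.mp he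
  have hxj : Relation.ReflTransGen (IsParent B p) x (p j) := by
    obtain rfl | hy := mem_parentEdge.mp hy
    · exact hxy
    · refine ((h.reflTransGen_iff_of_mem hy).mp hxy).resolve_left ?_
      rintro rfl
      exact hne (h.index_eq_of_mem hx hy ▸ rfl)
  obtain rfl | hz := mem_parentEdge.mp hz
  · exact hxj
  · exact hxj.tail ⟨j, hz, rfl⟩

lemma eq_of_mem_of_reachable (h : IsRootedHypertree r B p) {i : ι} {x y : V} (hx : x ∈ B i)
    (hy : y ∈ parentEdge B p i)
    (hxy : (twoSection ((parentEdges B p).erase (parentEdge B p i))).Reachable x y) : x = y := by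
  have hanc := h.reflTransGen_of_reachable hx hxy
  obtain rfl | hy := mem_parentEdge.mp hy
  · exact absurd hanc (h.acyclic.not_reflTransGen_parent hx)
  · exact ((h.reflTransGen_iff_of_mem hy).mp hanc).resolve_right
      (h.acyclic.not_reflTransGen_parent hx)

lemma bergeAcyclic (h : IsRootedHypertree r B p) : BergeAcyclic (parentEdges B p) := by
  intro e he a ha b hb hab
  obtain ⟨i, rfl⟩ := mem_parentEdges.mp he
  obtain rfl | ha' := mem_parentEdge.mp ha
  · obtain rfl | hb' := mem_parentEdge.mp hb
    · rfl
    · exact (h.eq_of_mem_of_reachable hb' ha hab.symm).symm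
  · exact h.eq_of_mem_of_reachable ha' hb hab

lemma reachable_root (h : IsRootedHypertree r B p) (v : V) :
    (twoSection (parentEdges B p)).Reachable r v := by
  induction v using h.acyclic.induction with
  | _ v ih =>
  obtain rfl | hv := eq_or_ne v r
  · exact .rfl
  · obtain ⟨i, hi⟩ := (h.exists_mem_iff v).mpr hv
    exact (ih _ ⟨i, hi, rfl⟩).trans <| reachable_twoSection (parentEdge_mem_parentEdges i)
      (parent_mem_parentEdge i) (mem_parentEdge.mpr (.inr hi))

lemma isHypertree (h : IsRootedHypertree r B p) : IsHypertree (parentEdges B p) where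
  two_le_card e he := by
    obtain ⟨i, rfl⟩ := mem_parentEdges.mp he
    rw [h.card_parentEdge]
    exact Nat.succ_le_succ (h.nonempty i).card_pos
  bergeAcyclic := h.bergeAcyclic
  preconnected u v := (h.reachable_root u).symm.trans (h.reachable_root v)

lemma eq_parent_of_reachable (h : IsRootedHypertree r B p) {i : ι} {v : V}
    (hv : v ∈ parentEdge B p i)
    (hrv : (twoSection ((parentEdges B p).erase (parentEdge B p i))).Reachable r v) :
    v = p i := by
  refine (mem_parentEdge.mp hv).resolve_right fun hi => ?_
  obtain rfl | ⟨_, _, j, hj, -⟩ := (h.reflTransGen_of_reachable hi hrv.symm).cases_tail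
  · exact h.root_notMem i hi
  · exact h.root_notMem j hj

lemma reachable_parent (h : IsRootedHypertree r B p) (i : ι) :
    (twoSection ((parentEdges B p).erase (parentEdge B p i))).Reachable r (p i) := by
  obtain hi | ⟨w, hw, hrw⟩ :=
    reachable_twoSection_erase_or_exists (parentEdge B p i) (h.reachable_root (p i))
  · exact hi
  · exact h.eq_parent_of_reachable hw hrw ▸ hrw

lemma gate_parentEdge (h : IsRootedHypertree r B p) (i : ι) :
    gate (parentEdges B p) r (parentEdge B p i) = p i :=
  (h.isHypertree.eq_gate (parentEdge_mem_parentEdges i) (parent_mem_parentEdge i)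
    (h.reachable_parent i)).symm

lemma hangingBlock_parentEdge (h : IsRootedHypertree r B p) (i : ι) :
    hangingBlock (parentEdges B p) r (parentEdge B p i) = B i := by
  rw [hangingBlock, h.gate_parentEdge, parentEdge, Finset.erase_insert (h.acyclic.parent_notMem i)]

lemma exists_block_eq_and_parent_eq [Fintype κ] {B' : κ → Finset V} {p' : κ → V}
    (h : IsRootedHypertree r B p) (h' : IsRootedHypertree r B' p')
    (hE : parentEdges B p = parentEdges B' p') (i : ι) : ∃ j, B' j = B i ∧ p' j = p i := by
  have hi : parentEdge B p i ∈ parentEdges B' p' := hE ▸ parentEdge_mem_parentEdges i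
  obtain ⟨j, hj⟩ := mem_parentEdges.mp hi
  refine ⟨j, ?_, ?_⟩
  · rw [← h.hangingBlock_parentEdge, ← h'.hangingBlock_parentEdge, hj, hE]
  · rw [← h.gate_parentEdge, ← h'.gate_parentEdge, hj, hE]

lemma prod_parentEdges {R : Type*} [CommMonoid R] (h : IsRootedHypertree r B p) (w : ℕ → R) :
    ∏ e ∈ parentEdges B p, w e.card = ∏ i, w ((B i).card + 1) := by
  rw [parentEdges, Finset.prod_image h.parentEdge_injective.injOn]
  simp only [h.card_parentEdge]

lemma exists_finpartition [Fintype V] (h : IsRootedHypertree r B p) :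
    ∃ (P : Finpartition (Finset.univ.erase r)) (q : P.parts → V),
      AcyclicParents (fun b : P.parts => b.1) q ∧
        parentEdges (fun b : P.parts => b.1) q = parentEdges B p := by
  obtain ⟨P, σ, hσ⟩ := h.exists_equiv_parts
  have hblocks : (fun b : P.parts => b.1) ∘ σ = B := funext hσ
  have hparents : (p ∘ σ.symm) ∘ σ = p := by
    rw [Function.comp_assoc, σ.symm_comp_self, Function.comp_id]
  refine ⟨P, p ∘ σ.symm, ?_, ?_⟩
  · rw [← acyclicParents_comp_equiv σ, hblocks, hparents]
    exact h.acyclic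
  · rw [← parentEdges_comp_equiv σ, hblocks, hparents]

end IsRootedHypertree

lemma IsHypertree.isRootedHypertree {E : Finset (Finset V)} (hE : IsHypertree E) (r : V) :
    IsRootedHypertree r (fun e : E => hangingBlock E r e) (fun e : E => gate E r e) where
  disjoint e f hne := Finset.disjoint_left.mpr fun _ he hf =>
    hne (Subtype.ext (hE.eq_of_mem_hangingBlock e.2 f.2 he hf))
  nonempty e := hE.nonempty_hangingBlock r e.2
  exists_mem_iff v := by
    refine ⟨?_, fun hv => ?_⟩
    · rintro ⟨e, he⟩ rfl
      exact hE.root_notMem_hangingBlock e.2 he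
    · obtain ⟨e, he, hve⟩ := hE.exists_mem_hangingBlock hv
      exact ⟨⟨e, he⟩, hve⟩
  acyclic := hE.acyclicParents_gate r

lemma IsHypertree.parentEdges_gate {E : Finset (Finset V)} (hE : IsHypertree E) (r : V) :
    parentEdges (fun e : E => hangingBlock E r e) (fun e : E => gate E r e) = E := by
  have parentEdge_eq (e : E) :
      parentEdge (fun e : E => hangingBlock E r e) (fun e : E => gate E r e) e = e :=
    Finset.insert_erase (hE.gate_spec r e.2).1
  ext e
  simp [mem_parentEdges, parentEdge_eq]

end RootedHypertree

section RootedHypertreeEquiv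

variable {V : Type*} [DecidableEq V]

lemma pairwise_disjoint_finpartition {s : Finset V} (P : Finpartition s) :
    Pairwise (Function.onFun Disjoint fun b : P.parts => b.1) := fun b c hne =>
  P.disjoint b.2 c.2 (Subtype.coe_ne_coe.mpr hne)

variable [Fintype V]

lemma exists_mem_finpartition_iff {r : V} (P : Finpartition (Finset.univ.erase r)) (v : V) :
    (∃ b : P.parts, v ∈ b.1) ↔ v ≠ r := by
  have hv : v ∈ P.parts.biUnion id ↔ v ∈ Finset.univ.erase r := by rw [P.biUnion_parts]
  simpa using hv

lemma isRootedHypertree_finpartition {r : V} {P : Finpartition (Finset.univ.erase r)}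
    {p : P.parts → V} (hp : AcyclicParents (fun b : P.parts => b.1) p) :
    IsRootedHypertree r (fun b : P.parts => b.1) p where
  disjoint := pairwise_disjoint_finpartition P
  nonempty b := P.nonempty_of_mem_parts b.2
  exists_mem_iff := exists_mem_finpartition_iff P
  acyclic := hp

lemma parentEdges_finpartition_injective (r : V) :
    Function.Injective fun x : Σ P : Finpartition (Finset.univ.erase r),
      {p : P.parts → V // AcyclicParents (fun b : P.parts => b.1) p} =>
        parentEdges (fun b : x.1.parts => b.1) x.2.1 := by
  rintro ⟨P, p, hp⟩ ⟨Q, q, hq⟩ hE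
  dsimp only at hE
  replace hp := isRootedHypertree_finpartition hp
  replace hq := isRootedHypertree_finpartition hq
  have parts_eq : P.parts = Q.parts := by
    refine Finset.Subset.antisymm (fun b hb => ?_) fun b hb => ?_
    · obtain ⟨c, rfl, -⟩ := hp.exists_block_eq_and_parent_eq hq hE ⟨b, hb⟩
      exact c.2
    · obtain ⟨c, rfl, -⟩ := hq.exists_block_eq_and_parent_eq hp hE.symm ⟨b, hb⟩
      exact c.2
  obtain rfl : P = Q := Finpartition.ext parts_eq
  have parent_eq : p = q := by
    funext b
    obtain ⟨c, hcb, hc⟩ := hp.exists_block_eq_and_parent_eq hq hE b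
    rw [← hc, Subtype.ext hcb]
  subst parent_eq
  rfl

/-- Rooting at `r` identifies hypertrees with partitions of the other vertices into blocks, together
with an acyclic choice of a parent for every block. -/
noncomputable def rootedHypertreeEquiv (r : V) :
    (Σ P : Finpartition (Finset.univ.erase r),
      {p : P.parts → V // AcyclicParents (fun b : P.parts => b.1) p}) ≃
        {E : Finset (Finset V) // IsHypertree E} :=
  .ofBijective (fun x => ⟨parentEdges (fun b : x.1.parts => b.1) x.2.1,
    (isRootedHypertree_finpartition x.2.2).isHypertree⟩) <| by
      refine ⟨fun x y hxy => parentEdges_finpartition_injective r (Subtype.ext_iff.mp hxy), ?_⟩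
      rintro ⟨E, hE⟩
      obtain ⟨P, q, hq, hqE⟩ := (hE.isRootedHypertree r).exists_finpartition
      exact ⟨⟨P, q, hq⟩, Subtype.ext (hqE.trans (hE.parentEdges_gate r))⟩

end RootedHypertreeEquiv

section Finpartition

variable {α : Type*} [DecidableEq α] {s : Finset α} {a : α} {b : Finset α}

lemma disjoint_sup_parts_erase (Q : Finpartition s) (hb : b ∈ insert ∅ Q.parts) :
    Disjoint ((Q.parts.erase b).sup id) b := by
  refine Finset.disjoint_sup_left.mpr fun c hc => ?_
  obtain ⟨hcb, hc⟩ := Finset.mem_erase.mp hc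
  obtain rfl | hb := Finset.mem_insert.mp hb
  · exact Finset.disjoint_empty_right _
  · exact Q.disjoint hc hb hcb

lemma sup_parts_erase_union (Q : Finpartition s) (hb : b ∈ insert ∅ Q.parts) :
    (Q.parts.erase b).sup id ∪ b = s := by
  rw [Finset.union_comm]
  change id b ⊔ _ = s
  rw [← Finset.sup_insert]
  obtain rfl | hb := Finset.mem_insert.mp hb
  · rw [Finset.erase_eq_of_notMem Q.empty_notMem_parts, Finset.sup_insert, Q.sup_parts]
    exact bot_sup_eq s
  · rw [Finset.insert_erase hb, Q.sup_parts]

/-- The partition of `insert a s` obtained from a partition of `s` by adding `a` to the part `b`;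
the choice `b = ∅` makes `{a}` a part of its own. -/
def insertIntoPart (Q : Finpartition s) (ha : a ∉ s) (hb : b ∈ insert ∅ Q.parts) :
    Finpartition (insert a s) :=
  (Q.ofSubset (Finset.erase_subset b Q.parts) rfl).extend (b := insert a b)
    (Finset.insert_ne_empty a b)
    (Finset.disjoint_insert_right.mpr
      ⟨fun h => ha (sup_parts_erase_union Q hb ▸ Finset.mem_union_left b h),
        disjoint_sup_parts_erase Q hb⟩)
    ((Finset.union_insert a _ b).trans (by rw [sup_parts_erase_union Q hb]))

lemma notMem_of_mem_insert_empty_parts (Q : Finpartition s) (ha : a ∉ s)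
    (hb : b ∈ insert ∅ Q.parts) : a ∉ b := fun h =>
  ha (sup_parts_erase_union Q hb ▸ Finset.mem_union_right _ h)

lemma insert_notMem_parts (Q : Finpartition s) (ha : a ∉ s) : insert a b ∉ Q.parts := fun h =>
  ha (Q.le h (Finset.mem_insert_self a b))

lemma parts_insertIntoPart (Q : Finpartition s) (ha : a ∉ s) (hb : b ∈ insert ∅ Q.parts) :
    (insertIntoPart Q ha hb).parts = insert (insert a b) (Q.parts.erase b) := rfl

lemma part_insertIntoPart (Q : Finpartition s) (ha : a ∉ s) (hb : b ∈ insert ∅ Q.parts) :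
    (insertIntoPart Q ha hb).part a = insert a b :=
  Finpartition.part_eq_of_mem _ (Finset.mem_insert_self _ _) (Finset.mem_insert_self a b)

lemma insertIntoPart_injective {Q Q' : Finpartition s} {b' : Finset α} (ha : a ∉ s)
    (hb : b ∈ insert ∅ Q.parts) (hb' : b' ∈ insert ∅ Q'.parts)
    (h : insertIntoPart Q ha hb = insertIntoPart Q' ha hb') : Q = Q' ∧ b = b' := by
  have part_eq : insert a b = insert a b' := by
    rw [← part_insertIntoPart Q ha hb, h, part_insertIntoPart]
  obtain rfl : b = b' := by
    rw [← Finset.erase_insert (notMem_of_mem_insert_empty_parts Q ha hb), part_eq,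
      Finset.erase_insert (notMem_of_mem_insert_empty_parts Q' ha hb')]
  have erase_eq : Q.parts.erase b = Q'.parts.erase b := by
    have hparts := congrArg (fun P => P.parts.erase (insert a b)) h
    have notMem_erase (P : Finpartition s) : insert a b ∉ P.parts.erase b := fun hmem =>
      insert_notMem_parts P ha (Finset.mem_of_mem_erase hmem)
    simpa only [parts_insertIntoPart, Finset.erase_insert (notMem_erase _)] using hparts
  refine ⟨Finpartition.ext ?_, rfl⟩
  obtain rfl | hne := eq_or_ne b ∅
  · rwa [Finset.erase_eq_of_notMem Q.empty_notMem_parts,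
      Finset.erase_eq_of_notMem Q'.empty_notMem_parts] at erase_eq
  · rw [← Finset.insert_erase (Finset.mem_of_mem_insert_of_ne hb hne), erase_eq,
      Finset.insert_erase (Finset.mem_of_mem_insert_of_ne hb' hne)]

lemma mem_parts_avoid_singleton (P : Finpartition s) :
    b ∈ (P.avoid {a}).parts ↔ ∃ c ∈ P.parts, ¬c ⊆ {a} ∧ c.erase a = b := by
  simp only [P.mem_avoid, Finset.sdiff_singleton_eq_erase]

lemma part_erase_mem_insert_empty_avoid (P : Finpartition s) (ha : a ∈ s) :
    (P.part a).erase a ∈ insert ∅ (P.avoid {a}).parts := by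
  by_cases hsub : P.part a ⊆ {a}
  · exact Finset.mem_insert.mpr (.inl ((Finset.erase_eq_empty_iff _ _).mpr
      (Finset.subset_singleton_iff.mp hsub)))
  · exact Finset.mem_insert_of_mem
      ((mem_parts_avoid_singleton P).mpr ⟨_, P.part_mem.mpr ha, hsub, rfl⟩)

lemma parts_avoid_erase_part (P : Finpartition s) (ha : a ∈ s) :
    (P.avoid {a}).parts.erase ((P.part a).erase a) = P.parts.erase (P.part a) := by
  ext c
  simp only [Finset.mem_erase, mem_parts_avoid_singleton]
  constructor
  · rintro ⟨hne, e, he, -, rfl⟩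
    have he_ne : e ≠ P.part a := fun h => hne (h ▸ rfl)
    rw [Finset.erase_eq_of_notMem fun hae => he_ne (P.part_eq_of_mem he hae).symm]
    exact ⟨he_ne, he⟩
  · rintro ⟨hne, hc⟩
    have hac : a ∉ c := fun h => hne (P.part_eq_of_mem hc h).symm
    obtain ⟨v, hv⟩ := P.nonempty_of_mem_parts hc
    refine ⟨fun h => ?_, c, hc, fun h => ?_, Finset.erase_eq_of_notMem hac⟩
    · exact Finset.disjoint_left.mp (P.disjoint hc (P.part_mem.mpr ha) hne) hv
        (Finset.mem_of_mem_erase (h ▸ hv))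
    · exact hac (Finset.mem_singleton.mp (h hv) ▸ hv)

lemma exists_insertIntoPart_eq (ha : a ∉ s) (P : Finpartition (insert a s)) :
    ∃ (Q : Finpartition s) (b : Finset α) (hb : b ∈ insert ∅ Q.parts),
      insertIntoPart Q ha hb = P := by
  have has : a ∈ insert a s := Finset.mem_insert_self a s
  have sdiff_eq : insert a s \ {a} = s := by
    rw [Finset.sdiff_singleton_eq_erase, Finset.erase_insert ha]
  obtain ⟨Q, hQ⟩ : ∃ Q : Finpartition s, Q.parts = (P.avoid {a}).parts :=
    ⟨(P.avoid {a}).copy sdiff_eq, rfl⟩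
  refine ⟨Q, (P.part a).erase a, hQ ▸ part_erase_mem_insert_empty_avoid P has,
    Finpartition.ext ?_⟩
  rw [parts_insertIntoPart, hQ, parts_avoid_erase_part P has, Finset.insert_erase (P.mem_part has),
    Finset.insert_erase (P.part_mem.mpr has)]

lemma sum_finpartition_insert {R : Type*} [CommSemiring R] (ha : a ∉ s) (f : Finset α → R) :
    ∑ P : Finpartition (insert a s), ∏ b ∈ P.parts, f b =
      ∑ Q : Finpartition s, ∑ b ∈ insert ∅ Q.parts,
        f (insert a b) * ∏ c ∈ Q.parts.erase b, f c := by
  rw [Finset.sum_sigma']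
  symm
  refine Finset.sum_bij (fun x hx => insertIntoPart x.1 ha (Finset.mem_sigma.mp hx).2)
    (fun _ _ => Finset.mem_univ _) ?_ ?_ ?_
  · rintro ⟨Q, b⟩ hb ⟨Q', b'⟩ hb' h
    obtain ⟨rfl, rfl⟩ := insertIntoPart_injective ha _ _ h
    rfl
  · intro P _
    obtain ⟨Q, b, hb, rfl⟩ := exists_insertIntoPart_eq ha P
    exact ⟨⟨Q, b⟩, Finset.mem_sigma.mpr ⟨Finset.mem_univ Q, hb⟩, rfl⟩
  · rintro ⟨Q, b⟩ hx
    rw [parts_insertIntoPart, Finset.prod_insert fun h =>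
      insert_notMem_parts Q ha (Finset.mem_of_mem_erase h)]

-- Weighting a block by `x * (#b - 1)!` counts permutations by cycles: adding `a` to a part `b`
-- multiplies its weight by `#b`, and these factors add up to `#s`.
lemma sum_finpartition_prod_factorial {R : Type*} [CommSemiring R] (x : R) (s : Finset α) :
    ∑ P : Finpartition s, ∏ b ∈ P.parts, x * ((b.card - 1).factorial : R) =
      (ascPochhammer R s.card).eval x := by
  induction s using Finset.induction_on with
  | empty =>
    change ∑ P : Finpartition (⊥ : Finset α), _ = _
    rw [Fintype.sum_unique, Finpartition.default_eq_empty]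
    simp
  | insert a s ha ih =>
    rw [sum_finpartition_insert ha, Finset.card_insert_of_notMem ha, ascPochhammer_succ_eval, ← ih,
      Finset.sum_mul]
    refine Finset.sum_congr rfl fun Q _ => ?_
    set F := ∏ c ∈ Q.parts, x * ((c.card - 1).factorial : R) with hF
    have insert_weight {b : Finset α} (hb : b ∈ Q.parts) :
        x * (((insert a b).card - 1).factorial : R) *
          ∏ c ∈ Q.parts.erase b, x * ((c.card - 1).factorial : R) = b.card * F := by
      rw [Finset.card_insert_of_notMem fun h => ha (Q.le hb h), Nat.add_sub_cancel,
        ← Nat.mul_factorial_pred (Q.nonempty_of_mem_parts hb).card_pos.ne', hF,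
        ← Finset.mul_prod_erase _ _ hb]
      push_cast
      ring
    rw [Finset.sum_insert Q.empty_notMem_parts, Finset.erase_eq_of_notMem Q.empty_notMem_parts,
      Finset.sum_congr rfl fun b => insert_weight, ← Finset.sum_mul, ← Nat.cast_sum,
      Q.sum_card_parts]
    simp only [insert_empty_eq, Finset.card_singleton, tsub_self, Nat.factorial_zero, Nat.cast_one,
      mul_one]
    ring

end Finpartition

section StirlingFirst

open Polynomial

lemma descPochhammer_eval_eq_comp {R : Type*} [Ring R] (m : ℕ) (q : R[X]) :
    (descPochhammer R[X] m).eval q = (descPochhammer R m).comp q := by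
  rw [← descPochhammer_map C m, eval_map, comp]

lemma S1_eq_coeff_descPochhammer (m k : ℕ) : S1 m k = (descPochhammer ℤ m).coeff k := by
  rw [S1, ← comp_X (p := descPochhammer ℤ m), ← descPochhammer_eval_eq_comp,
    descPochhammer_eval_eq_prod_range]
  simp only [map_natCast]

lemma coeff_ascPochhammer_eval_C_mul_X (a : ℤ) (m k : ℕ) :
    ((ascPochhammer ℤ[X] m).eval (C a * X)).coeff k = (-1) ^ (m + k) * a ^ k * S1 m k := by
  have asc_eq : (ascPochhammer ℤ[X] m).eval (C a * X) =
      C ((-1) ^ m) * (descPochhammer ℤ m).comp (C (-a) * X) := by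
    rw [← neg_neg (C a * X), ascPochhammer_eval_neg_eq_descPochhammer,
      descPochhammer_eval_eq_comp]
    simp only [map_pow, map_neg, map_one, neg_mul]
  rw [asc_eq, coeff_C_mul, comp_C_mul_X_coeff, S1_eq_coeff_descPochhammer, neg_pow a]
  ring

end StirlingFirst

section Enumeration

variable {V : Type*} [DecidableEq V] [Fintype V]

lemma card_acyclicParents_finpartition_mul_card {r : V}
    (P : Finpartition (Finset.univ.erase r)) :
    Nat.card {p : P.parts → V // AcyclicParents (fun b : P.parts => b.1) p} * Fintype.card V =
      Fintype.card V ^ P.parts.card := by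
  have roots_eq : ({v | ∀ b : P.parts, v ∉ b.1} : Finset V) = {r} := by
    ext v
    rw [Finset.mem_filter_univ, ← not_exists, exists_mem_finpartition_iff, not_not,
      Finset.mem_singleton]
  rw [card_acyclicParents_mul_card (pairwise_disjoint_finpartition P), roots_eq,
    Finset.card_singleton, one_mul, Fintype.card_coe]

open scoped Classical in
lemma card_mul_sum_isHypertree {R : Type*} [CommSemiring R] (w : ℕ → R) (r : V) :
    (Fintype.card V : R) * ∑ E : Finset (Finset V) with IsHypertree E, ∏ e ∈ E, w e.card =
      ∑ P : Finpartition (Finset.univ.erase r),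
        ∏ b ∈ P.parts, Fintype.card V * w (b.card + 1) := by
  have sum_eq : ∑ E : Finset (Finset V) with IsHypertree E, ∏ e ∈ E, w e.card =
      ∑ P : Finpartition (Finset.univ.erase r),
        ∑ _p : {p : P.parts → V // AcyclicParents (fun b : P.parts => b.1) p},
          ∏ b ∈ P.parts, w (b.card + 1) := by
    rw [← Finset.sum_subtype_eq_sum_filter, Finset.subtype_univ,
      ← (rootedHypertreeEquiv r).sum_comp, Fintype.sum_sigma]
    refine Finset.sum_congr rfl fun P _ => Finset.sum_congr rfl fun p _ => ?_
    refine ((isRootedHypertree_finpartition p.2).prod_parentEdges w).trans ?_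
    exact Finset.prod_coe_sort P.parts fun b => w (b.card + 1)
  rw [sum_eq, Finset.mul_sum]
  refine Finset.sum_congr rfl fun P _ => ?_
  have card_eq := card_acyclicParents_finpartition_mul_card P
  rw [Nat.card_eq_fintype_card, mul_comm] at card_eq
  rw [Finset.sum_const, Finset.card_univ, nsmul_eq_mul, ← mul_assoc, ← Nat.cast_mul, card_eq,
    Finset.prod_mul_distrib, Finset.prod_const, Nat.cast_pow]

open Polynomial

open scoped Classical in
lemma card_mul_sum_isHypertree_prod_factorial (r : V) :
    C (Fintype.card V : ℤ) * ∑ E : Finset (Finset V) with IsHypertree E,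
        C (∏ e ∈ E, ((e.card - 2).factorial : ℤ)) * X ^ E.card =
      (ascPochhammer ℤ[X] (Fintype.card V - 1)).eval (C (Fintype.card V : ℤ) * X) := by
  have hypertree_sum := card_mul_sum_isHypertree (fun m => C ((m - 2).factorial : ℤ) * X) r
  have partition_sum :=
    sum_finpartition_prod_factorial (C (Fintype.card V : ℤ) * X) (Finset.univ.erase r)
  rw [Finset.card_erase_of_mem (Finset.mem_univ r), Finset.card_univ] at partition_sum
  rw [← partition_sum]
  simp only [Finset.prod_mul_distrib, Finset.prod_const, ← map_prod] at hypertree_sum ⊢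
  simpa [mul_comm, mul_left_comm, mul_assoc] using hypertree_sum

open scoped Classical in
lemma sum_isHypertree_prod_factorial [Nonempty V] {k : ℕ} (hk : 1 ≤ k) :
    ∑ E : Finset (Finset V) with IsHypertree E ∧ E.card = k,
        ∏ e ∈ E, ((e.card - 2).factorial : ℤ) =
      (-1) ^ (Fintype.card V + k + 1) * (Fintype.card V : ℤ) ^ (k - 1) *
        S1 (Fintype.card V - 1) k := by
  obtain ⟨r⟩ := ‹Nonempty V›
  have h := congrArg (coeff · k) (card_mul_sum_isHypertree_prod_factorial r)
  simp only [coeff_C_mul, finsetSum_coeff, coeff_X_pow, mul_ite, mul_one, mul_zero,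
    ← Finset.sum_filter, Finset.filter_filter, coeff_ascPochhammer_eval_C_mul_X,
    eq_comm (a := k)] at h
  have card_ne_zero : (Fintype.card V : ℤ) ≠ 0 := by exact_mod_cast Fintype.card_ne_zero
  refine mul_left_cancel₀ card_ne_zero (h.trans ?_)
  obtain ⟨j, rfl⟩ := Nat.exists_eq_add_of_le' hk
  obtain ⟨m, hm⟩ := Nat.exists_eq_succ_of_ne_zero (Fintype.card_ne_zero (α := V))
  rw [hm]
  simp only [Nat.succ_eq_add_one, Nat.add_sub_cancel]
  ring

end Enumeration

theorem stmt15_general {V : Type*} [DecidableEq V] [Fintype V] [Nonempty V] {k : ℕ} (hk : 1 ≤ k) :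
    ∑ᶠ T ∈ {T : Hyperforest V | HFConnected T ∧ T.edges.card = k},
        ∏ e ∈ T.edges, (((e.card - 2).factorial : ℕ) : ℤ) =
      (-1 : ℤ) ^ (Fintype.card V + k + 1) * (Fintype.card V : ℤ) ^ (k - 1) *
        S1 (Fintype.card V - 1) k := by
  classical
  have finsum_eq := finsum_mem_eq_of_bijOn
    (f := fun T => ∏ e ∈ T.edges, ((e.card - 2).factorial : ℤ))
    (g := fun E => ∏ e ∈ E, ((e.card - 2).factorial : ℤ))
    Hyperforest.edges (Hyperforest.bijOn_edges_hypertree V k) fun _ _ => rfl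
  rw [finsum_eq, ← sum_isHypertree_prod_factorial hk, ← finsum_mem_coe_finset]
  simp only [Finset.coe_filter_univ]

/-- The weighted count of hypertrees with `k` hyperedges on `n` labelled vertices:
`∑_{T ∈ HT_k(n)} ∏_{e ∈ E(T)} (|e|-2)! = (-1)^{n+k+1} n^{k-1} S_1(n-1,k)`. -/
theorem stmt15 (n k : ℕ) (hn : 2 ≤ n) (hk1 : 1 ≤ k) (hk2 : k ≤ n - 1) :
    ∑ᶠ T ∈ {T : Hyperforest (Fin n) | HFConnected T ∧ T.edges.card = k},
        ∏ e ∈ T.edges, (((e.card - 2).factorial : ℕ) : ℤ) =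
      (-1 : ℤ) ^ (n + k + 1) * (n : ℤ) ^ (k - 1) * S1 (n - 1) k := by
  have : NeZero n := ⟨by omega⟩
  simpa only [Fintype.card_fin] using stmt15_general (V := Fin n) hk1
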